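/- arXiv:2006.04065 — 8 statements merged into one kernel-verified Lean document; each statement's English description precedes it below -/
import Mathlib

section
/- Let W1 and W2 be ordered vector spaces and let T : W1 → W2 be a positive, order continuous linear operator. Then T is õ-continuous, i.e., for every net (x_α) in W1 that õ-converges to 0, the net (T x_α) õ-converges to 0 in W2. -/
/-!
A positive order continuous `T` preserves `y ↓ 0`: a net `y ↓ 0` o-converges to `0`, dominated by
itself, so `T y` is dominated by some `z ↓ 0`; every lower bound of `T y` is then a lower bound of
`z`, hence `≤ 0`, while positivity makes `T y` decreasing and nonnegative (`DownTo0.map`).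
Applying this to the net dominating an õ-null net `x` shows that `T y` dominates `T x`, over the
same index set as `y` and with the same thresholds `α₀`.
-/

/-!
Common definitions: õ-convergence, o-convergence, decreasing nets with infimum 0,
order continuity and õ-continuity of linear operators, following the paper
"semi-order continuous operators on vector spaces".
-/

/-- The net `y : B → W` (indexed by the relation `le` on `B`) is decreasing and
has infimum `0` in `W` (written `y_β ↓ 0`). -/
def DownTo0 {B W : Type*} [AddCommGroup W] [PartialOrder W]
    (le : B → B → Prop) (y : B → W) : Prop :=
  (∀ b₁ b₂ : B, le b₁ b₂ → y b₂ ≤ y b₁) ∧ IsGLB (Set.range y) (0 : W)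

/-- The net `x : A → W` õ-converges to `l ∈ W`: there is a net `y : B → W`,
possibly over a different (nonempty, directed, preordered) index set `B`, with
`y_β ↓ 0`, such that for every `β` there exists `α₀` with `±(x_α - l) ≤ y_β`
for all `α ≥ α₀`. -/
def OTildeConv {A W : Type*} [AddCommGroup W] [PartialOrder W] [Preorder A]
    (x : A → W) (l : W) : Prop :=
  ∃ (B : Type) (le : B → B → Prop) (y : B → W),
    Nonempty B ∧
    (∀ b : B, le b b) ∧
    (∀ b₁ b₂ b₃ : B, le b₁ b₂ → le b₂ b₃ → le b₁ b₃) ∧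
    (∀ b₁ b₂ : B, ∃ b₃ : B, le b₁ b₃ ∧ le b₂ b₃) ∧
    DownTo0 le y ∧
    ∀ b : B, ∃ a₀ : A, ∀ a : A, a₀ ≤ a → x a - l ≤ y b ∧ -(x a - l) ≤ y b

/-- The net `x : A → W` o-converges to `l ∈ W`: there is a net `y` over the same
index set with `y_α ↓ 0` and `±(x_α - l) ≤ y_α` for all `α`. -/
def OConv {A W : Type*} [AddCommGroup W] [PartialOrder W] [Preorder A]
    (x : A → W) (l : W) : Prop :=
  ∃ y : A → W, DownTo0 (· ≤ · : A → A → Prop) y ∧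
    ∀ a : A, x a - l ≤ y a ∧ -(x a - l) ≤ y a

/-- A linear operator is order continuous if it maps nets o-converging to `0`
to nets o-converging to `0`. -/
def OrderContinuousLM {W1 W2 : Type*}
    [AddCommGroup W1] [PartialOrder W1] [Module ℝ W1]
    [AddCommGroup W2] [PartialOrder W2] [Module ℝ W2] (T : W1 →ₗ[ℝ] W2) : Prop :=
  ∀ (A : Type) [Preorder A] [IsDirected A (· ≤ ·)] [Nonempty A] (x : A → W1),
    OConv x 0 → OConv (fun a => T (x a)) 0

/-- A linear operator is õ-continuous if it maps nets õ-converging to `0`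
to nets õ-converging to `0`. -/
def OTildeContinuousLM {W1 W2 : Type*}
    [AddCommGroup W1] [PartialOrder W1] [Module ℝ W1]
    [AddCommGroup W2] [PartialOrder W2] [Module ℝ W2] (T : W1 →ₗ[ℝ] W2) : Prop :=
  ∀ (A : Type) [Preorder A] [IsDirected A (· ≤ ·)] [Nonempty A] (x : A → W1),
    OTildeConv x 0 → OTildeConv (fun a => T (x a)) 0

/-- A positive order continuous operator maps nets `y ↓ 0` to nets `T y ↓ 0`. -/
theorem DownTo0.map {W1 W2 : Type*}
    [AddCommGroup W1] [PartialOrder W1] [Module ℝ W1]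
    [CovariantClass W1 W1 (· + ·) (· ≤ ·)]
    [AddCommGroup W2] [PartialOrder W2] [Module ℝ W2]
    {T : W1 →ₗ[ℝ] W2} (hmono : Monotone T) (hoc : OrderContinuousLM T)
    {B : Type} [Preorder B] [IsDirected B (· ≤ ·)] [Nonempty B] {y : B → W1}
    (hy : DownTo0 (· ≤ · : B → B → Prop) y) :
    DownTo0 (· ≤ · : B → B → Prop) (fun b => T (y b)) := by
  have hy0 : ∀ b, 0 ≤ y b := fun b => hy.2.1 ⟨b, rfl⟩
  obtain ⟨z, hz, hTz⟩ : OConv (fun b => T (y b)) 0 := by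
    refine hoc B y ⟨y, hy, fun b => ⟨by simp, ?_⟩⟩
    simpa using (neg_nonpos.2 (hy0 b)).trans (hy0 b)
  refine ⟨fun b₁ b₂ h => hmono (hy.1 b₁ b₂ h), ?_, fun w hw => hz.2.2 ?_⟩
  · rintro _ ⟨b, rfl⟩
    simpa using hmono (hy0 b)
  · rintro _ ⟨b, rfl⟩
    have hle : T (y b) ≤ z b := by simpa using (hTz b).1
    exact (hw ⟨b, rfl⟩).trans hle

/-- A positive order continuous linear operator between ordered
vector spaces is õ-continuous. -/
theorem stmt_5 {W1 W2 : Type*}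
    [AddCommGroup W1] [PartialOrder W1] [Module ℝ W1]
    [CovariantClass W1 W1 (· + ·) (· ≤ ·)] [PosSMulMono ℝ W1]
    [AddCommGroup W2] [PartialOrder W2] [Module ℝ W2]
    [CovariantClass W2 W2 (· + ·) (· ≤ ·)] [PosSMulMono ℝ W2]
    (T : W1 →ₗ[ℝ] W2)
    (hpos : ∀ v : W1, 0 ≤ v → 0 ≤ T v)
    (hoc : OrderContinuousLM T) :
    OTildeContinuousLM T := by
  have hmono : Monotone T := fun u v h => by
    simpa using hpos (v - u) (sub_nonneg.2 h)
  intro A _ _ _ x ⟨B, le, y, hne, hrefl, htrans, hdir, hy, hxy⟩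
  letI : Preorder B := { le := le, le_refl := hrefl, le_trans := htrans }
  haveI : IsDirected B (· ≤ ·) := ⟨hdir⟩
  refine ⟨B, le, fun b => T (y b), hne, hrefl, htrans, hdir, DownTo0.map hmono hoc hy,
    fun b => ?_⟩
  obtain ⟨a₀, ha₀⟩ := hxy b
  exact ⟨a₀, fun a ha =>
    ⟨by simpa using hmono (ha₀ a ha).1, by simpa using hmono (ha₀ a ha).2⟩⟩
end

section
/- Let W1 be a directed ordered vector space, let W2 be a pre-Riesz space, and let (W3, i) be a vector lattice cover of W2. If T : W1 → W2 is an õ-continuous linear operator, then i ∘ T : W1 → W3 is õ-continuous. -/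
/-- Let `W1` be a directed ordered vector space, `W2` a pre-Riesz
space with vector lattice cover `(W3, i)`. If `T : W1 → W2` is õ-continuous,
then `i ∘ T : W1 → W3` is õ-continuous. -/
theorem stmt_8 {W1 W2 W3 : Type*}
    [AddCommGroup W1] [PartialOrder W1] [Module ℝ W1]
    [CovariantClass W1 W1 (· + ·) (· ≤ ·)] [PosSMulMono ℝ W1]
    (hdir : ∀ x y : W1, ∃ z : W1, x ≤ z ∧ y ≤ z)
    [AddCommGroup W2] [PartialOrder W2] [Module ℝ W2]
    [CovariantClass W2 W2 (· + ·) (· ≤ ·)] [PosSMulMono ℝ W2]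
    (hpre : ∀ x y z : W2,
      upperBounds ({x + y, x + z} : Set W2) ⊆ upperBounds ({y, z} : Set W2) → 0 ≤ x)
    [AddCommGroup W3] [Lattice W3] [Module ℝ W3]
    [CovariantClass W3 W3 (· + ·) (· ≤ ·)] [PosSMulMono ℝ W3]
    (i : W2 →ₗ[ℝ] W3)
    (hbipos : ∀ v : W2, 0 ≤ i v ↔ 0 ≤ v)
    (hdense : ∀ u : W3, IsGLB {w : W3 | w ∈ Set.range i ∧ u ≤ w} u)
    (T : W1 →ₗ[ℝ] W2)
    (hT : OTildeContinuousLM T) :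
    OTildeContinuousLM (i.comp T) := by
  have hmono : ∀ a b : W2, i a ≤ i b ↔ a ≤ b := by
    intro a b
    rw [← sub_nonneg, ← map_sub, hbipos, sub_nonneg]
  intro A _ _ _ x hx
  obtain ⟨B, le, y, hne, hrefl, htrans, hdirB, ⟨hanti, hglb⟩, hbound⟩ := hT A x hx
  refine ⟨B, le, fun b => i (y b), hne, hrefl, htrans, hdirB, ⟨?_, ?_, ?_⟩, ?_⟩
  · intro b₁ b₂ h
    exact (hmono _ _).2 (hanti b₁ b₂ h)
  · rintro _ ⟨b, rfl⟩
    exact (hbipos _).2 (hglb.1 ⟨b, rfl⟩)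
  · intro u hu
    -- Density is applied at `-u`: every `i v ≥ -u` satisfies `i (-v) ≤ u ≤ i (y b)` for all `b`.
    rw [← neg_nonneg]
    refine (hdense (-u)).2 ?_
    rintro _ ⟨⟨v, rfl⟩, hv⟩
    rw [hbipos, ← neg_nonpos]
    refine hglb.2 ?_
    rintro _ ⟨b, rfl⟩
    rw [← hmono, map_neg]
    exact (neg_le.1 hv).trans (hu ⟨b, rfl⟩)
  · intro b
    obtain ⟨a₀, ha₀⟩ := hbound b
    refine ⟨a₀, fun a ha => ?_⟩
    have h := ha₀ a ha
    simp only [sub_zero] at h ⊢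
    refine ⟨(hmono _ _).2 h.1, ?_⟩
    rw [LinearMap.comp_apply, ← map_neg]
    exact (hmono _ _).2 h.2
end

section
/- Let V1 and V2 be pre-Riesz spaces with vector lattice covers (W1, i1) and (W2, i2) respectively. Let T : V1 → V2 be a positive linear operator that has a positive linear extension S : W1 → W2, i.e., S ∘ i1 = i2 ∘ T. If S is õ-continuous, then T is õ-continuous. -/
/-- A bipositive map with order dense range preserves the relation `inf y = 0`: a lower bound `w`
of the image satisfies `-w = inf {i v | -w ≤ i v}`, and each such `-v` is a lower bound of `y`. -/
theorem isGLB_range_map_of_orderDense {V W B : Type*}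
    [AddCommGroup V] [PartialOrder V] [Module ℝ V] [CovariantClass V V (· + ·) (· ≤ ·)]
    [AddCommGroup W] [PartialOrder W] [Module ℝ W] [CovariantClass W W (· + ·) (· ≤ ·)]
    (i : V →ₗ[ℝ] W) (hbipos : ∀ v : V, 0 ≤ i v ↔ 0 ≤ v)
    (hdense : ∀ u : W, IsGLB {w : W | w ∈ Set.range i ∧ u ≤ w} u)
    (y : B → V) (hy : IsGLB (Set.range y) 0) :
    IsGLB (Set.range fun b => i (y b)) 0 := by
  have mono : ∀ u v : V, i u ≤ i v ↔ u ≤ v := fun u v => by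
    rw [← sub_nonneg, ← map_sub, hbipos, sub_nonneg]
  constructor
  · rintro _ ⟨b, rfl⟩
    exact (hbipos _).2 (hy.1 ⟨b, rfl⟩)
  · intro w hw
    rw [← neg_nonneg]
    apply (hdense (-w)).2
    rintro _ ⟨⟨v, rfl⟩, hv⟩
    rw [hbipos, ← neg_nonpos]
    apply hy.2
    rintro _ ⟨b, rfl⟩
    rw [← mono, map_neg]
    exact (neg_le.1 hv).trans (hw ⟨b, rfl⟩)

/-- Let `V1, V2` be pre-Riesz spaces with vector lattice covers
`(W1, i1)` and `(W2, i2)`. If a positive linear operator `T : V1 → V2` has a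
positive linear extension `S : W1 → W2` (`S ∘ i1 = i2 ∘ T`) and `S` is
õ-continuous, then `T` is õ-continuous. -/
theorem stmt_9 {V1 V2 W1 W2 : Type*}
    [AddCommGroup V1] [PartialOrder V1] [Module ℝ V1]
    [CovariantClass V1 V1 (· + ·) (· ≤ ·)] [PosSMulMono ℝ V1]
    (hpre1 : ∀ x y z : V1,
      upperBounds ({x + y, x + z} : Set V1) ⊆ upperBounds ({y, z} : Set V1) → 0 ≤ x)
    [AddCommGroup V2] [PartialOrder V2] [Module ℝ V2]
    [CovariantClass V2 V2 (· + ·) (· ≤ ·)] [PosSMulMono ℝ V2]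
    (hpre2 : ∀ x y z : V2,
      upperBounds ({x + y, x + z} : Set V2) ⊆ upperBounds ({y, z} : Set V2) → 0 ≤ x)
    [AddCommGroup W1] [Lattice W1] [Module ℝ W1]
    [CovariantClass W1 W1 (· + ·) (· ≤ ·)] [PosSMulMono ℝ W1]
    [AddCommGroup W2] [Lattice W2] [Module ℝ W2]
    [CovariantClass W2 W2 (· + ·) (· ≤ ·)] [PosSMulMono ℝ W2]
    (i1 : V1 →ₗ[ℝ] W1)
    (hbipos1 : ∀ v : V1, 0 ≤ i1 v ↔ 0 ≤ v)
    (hdense1 : ∀ u : W1, IsGLB {w : W1 | w ∈ Set.range i1 ∧ u ≤ w} u)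
    (i2 : V2 →ₗ[ℝ] W2)
    (hbipos2 : ∀ v : V2, 0 ≤ i2 v ↔ 0 ≤ v)
    (hdense2 : ∀ u : W2, IsGLB {w : W2 | w ∈ Set.range i2 ∧ u ≤ w} u)
    (T : V1 →ₗ[ℝ] V2) (hTpos : ∀ v : V1, 0 ≤ v → 0 ≤ T v)
    (S : W1 →ₗ[ℝ] W2) (hSpos : ∀ w : W1, 0 ≤ w → 0 ≤ S w)
    (hext : ∀ v : V1, S (i1 v) = i2 (T v))
    (hS : OTildeContinuousLM S) :
    OTildeContinuousLM T := by
  have mono1 : ∀ u v : V1, i1 u ≤ i1 v ↔ u ≤ v := fun u v => by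
    rw [← sub_nonneg, ← map_sub, hbipos1, sub_nonneg]
  have mono2 : ∀ u v : V2, i2 u ≤ i2 v ↔ u ≤ v := fun u v => by
    rw [← sub_nonneg, ← map_sub, hbipos2, sub_nonneg]
  have monoT : ∀ u v : V1, u ≤ v → T u ≤ T v := fun u v h => by
    rw [← sub_nonneg, ← map_sub]
    exact hTpos _ (sub_nonneg.2 h)
  intro A _ _ _ x hx
  obtain ⟨B, le, y, hne, hrefl, htrans, hdir, ⟨hanti, hglb⟩, hdom⟩ := hx
  have hy0 : ∀ b, 0 ≤ y b := fun b => hglb.1 ⟨b, rfl⟩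
  have hi1 : IsGLB (Set.range fun b => i1 (y b)) (0 : W1) :=
    isGLB_range_map_of_orderDense i1 hbipos1 hdense1 y hglb
  -- `(i1 (y b))` dominates itself, so it õ-converges to `0`.
  let _ : Preorder B := { le := le, le_refl := hrefl, le_trans := htrans }
  have _ : IsDirected B (· ≤ ·) := ⟨hdir⟩
  have hconv : OTildeConv (fun b => i1 (y b)) 0 := by
    refine ⟨B, le, fun b => i1 (y b), hne, hrefl, htrans, hdir,
      ⟨fun b₁ b₂ h => (mono1 _ _).2 (hanti _ _ h), hi1⟩, fun b => ⟨b, fun a hba => ?_⟩⟩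
    have h0 : 0 ≤ i1 (y a) := (hbipos1 _).2 (hy0 a)
    have h1 : i1 (y a) ≤ i1 (y b) := (mono1 _ _).2 (hanti _ _ hba)
    rw [sub_zero]
    exact ⟨h1, (neg_nonpos.2 h0).trans (h0.trans h1)⟩
  obtain ⟨C, leC, z, -, -, -, -, ⟨-, hzglb⟩, hzdom⟩ := hS B _ hconv
  refine ⟨B, le, fun b => T (y b), hne, hrefl, htrans, hdir,
    ⟨fun b₁ b₂ h => monoT _ _ (hanti _ _ h), ?_, ?_⟩, fun b => ?_⟩
  · rintro _ ⟨b, rfl⟩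
    exact hTpos _ (hy0 b)
  · intro v hv
    -- `i2 v` lies below every `i2 (T (y b)) = S (i1 (y b))`, hence below every `z c`.
    rw [← mono2, map_zero]
    apply hzglb.2
    rintro _ ⟨c, rfl⟩
    obtain ⟨b, hb⟩ := hzdom c
    have h1 : S (i1 (y b)) - 0 ≤ z c := (hb b le_rfl).1
    rw [sub_zero, hext] at h1
    exact ((mono2 _ _).2 (hv ⟨b, rfl⟩)).trans h1
  · obtain ⟨a₀, ha₀⟩ := hdom b
    refine ⟨a₀, fun a ha => ?_⟩
    obtain ⟨h1, h2⟩ := ha₀ a ha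
    rw [sub_zero] at h1 h2 ⊢
    rw [← map_neg]
    exact ⟨monoT _ _ h1, monoT _ _ h2⟩
end

section
/- Let U be an ordered vector space, W an order dense linear subspace of U, V a vector space, and T : V → W a linear operator. If a net (x_α) in V satisfies x_α →{W,T} 0, then x_α →{U,T} 0 (where T is viewed as an operator into U). -/
/-- Let `W` be an order dense linear subspace of the ordered
vector space `U`, `V` a vector space and `T : V → W` linear. If a net `(x_α)`
in `V` is `{W,T}`-order convergent to `0`, then it is `{U,T}`-order convergent
to `0` (viewing `T` as an operator into `U`). -/
theorem stmt_12 {U V : Type*}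
    [AddCommGroup U] [PartialOrder U] [Module ℝ U]
    [CovariantClass U U (· + ·) (· ≤ ·)] [PosSMulMono ℝ U]
    [AddCommGroup V] [Module ℝ V]
    (W : Submodule ℝ U)
    (hdense : ∀ u : U, IsGLB {z : U | z ∈ W ∧ u ≤ z} u)
    (T : V →ₗ[ℝ] W)
    {A : Type*} [Preorder A] [IsDirected A (· ≤ ·)] [Nonempty A]
    (x : A → V)
    (h : OTildeConv (fun a => T (x a)) (0 : W)) :
    OTildeConv (fun a => (T (x a) : U)) (0 : U) := by
  have : IsOrderedAddMonoid U := {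
    add_le_add_left := fun a b hab c => by
      rw [add_comm a c, add_comm b c]
      exact CovariantClass.elim c hab }
  obtain ⟨B, le, y, hne, hrefl, htrans, hdir, ⟨hmono, hglb⟩, hconv⟩ := h
  refine ⟨B, le, fun b => (y b : U), hne, hrefl, htrans, hdir, ⟨hmono, ?_, ?_⟩, hconv⟩
  · rintro _ ⟨b, rfl⟩
    exact hglb.1 ⟨b, rfl⟩
  · intro u hu
    -- Density at `-u`: it suffices that every `z ∈ W` with `-u ≤ z` is nonnegative.
    rw [← neg_nonneg]
    refine (hdense (-u)).2 ?_
    rintro z ⟨hzW, hz⟩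
    have hlow : (-⟨z, hzW⟩ : W) ∈ lowerBounds (Set.range y) := by
      rintro _ ⟨b, rfl⟩
      have hub : u ≤ (y b : U) := hu ⟨b, rfl⟩
      exact (neg_le.mp hz).trans hub
    have h0 : -z ≤ 0 := hglb.2 hlow
    exact neg_nonpos.mp h0
end

section
/- Let V be a vector space, W an ordered vector space, and T : V → W a linear operator such that the image T(V) is order dense in W. If a net (x_α) in V is T(V)-order convergent to x ∈ V (i.e., the dominating net can be chosen in T(V) with infimum 0 taken in T(V)), then x_α →{W,T} x. -/
/-- Let `T : V → W` be linear with `T(V)` order dense in `W`.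
If a net `(x_α)` in `V` is `T(V)`-order convergent to `x` (the dominating net
lies in `T(V)` and decreases to `0` with the infimum taken in `T(V)`), then
`x_α →{W,T} x`. -/
theorem stmt_13 {V W : Type*} [AddCommGroup V] [Module ℝ V]
    [AddCommGroup W] [PartialOrder W] [Module ℝ W]
    [CovariantClass W W (· + ·) (· ≤ ·)] [PosSMulMono ℝ W]
    (T : V →ₗ[ℝ] W)
    (hdense : ∀ w : W, IsGLB {z : W | z ∈ LinearMap.range T ∧ w ≤ z} w)
    {A : Type*} [Preorder A] [IsDirected A (· ≤ ·)] [Nonempty A]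
    (x : A → V) (l : V)
    (h : OTildeConv
      (fun a => (⟨T (x a), LinearMap.mem_range_self T (x a)⟩ : LinearMap.range T))
      (⟨T l, LinearMap.mem_range_self T l⟩ : LinearMap.range T)) :
    OTildeConv (fun a => T (x a)) (T l) := by
  obtain ⟨B, le, y, hne, hrefl, htrans, hdir, ⟨hanti, hlb, hglb⟩, hdom⟩ := h
  haveI : IsOrderedAddMonoid W :=
    { add_le_add_left := fun a b hab c => by
        rw [add_comm a c, add_comm b c]
        exact CovariantClass.elim c hab }
  refine ⟨B, le, fun b => (y b : W), hne, hrefl, htrans, hdir,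
    ⟨fun b₁ b₂ h12 => hanti b₁ b₂ h12, ?_, ?_⟩, fun b => hdom b⟩
  · rintro _ ⟨b, rfl⟩
    exact hlb ⟨b, rfl⟩
  · intro w hw
    -- It suffices that `0` is a lower bound of the `z` in the range with `-w ≤ z`.
    refine neg_nonneg.mp ((hdense (-w)).2 ?_)
    rintro z ⟨hz, hwz⟩
    have hle : (⟨-z, neg_mem hz⟩ : LinearMap.range T) ≤ 0 := by
      apply hglb
      rintro _ ⟨b, rfl⟩
      exact (neg_le.mp hwz).trans (hw ⟨b, rfl⟩)
    exact neg_nonpos.mp hle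
end

section
/- Let W2 be a vector lattice and W1 an ideal of W2. Let V be a vector space and T : V → W1 a linear operator. Let (x_α) be a net in V such that the net (T x_α) is order bounded in W1 (i.e., there exists u ∈ W1 with u ≥ 0 and |T x_α| ≤ u for all α). If x_α →{W2,T} 0, then x_α →{W1,T} 0. -/
/-- Let `W2` be a vector lattice, `W1` an ideal of `W2`,
`T : V → W1` linear, and `(x_α)` a net in `V` such that `(T x_α)` is order
bounded in `W1` (there is `u ∈ W1`, `u ≥ 0`, with `|T x_α| ≤ u` for all `α`).
If `x_α →{W2,T} 0`, then `x_α →{W1,T} 0`. -/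
theorem stmt_14 {V W2 : Type*} [AddCommGroup V] [Module ℝ V]
    [AddCommGroup W2] [Lattice W2] [Module ℝ W2]
    [CovariantClass W2 W2 (· + ·) (· ≤ ·)] [PosSMulMono ℝ W2]
    (W1 : Submodule ℝ W2)
    (hideal : ∀ x : W2, ∀ y ∈ W1, |x| ≤ |y| → x ∈ W1)
    (T : V →ₗ[ℝ] W1)
    {A : Type*} [Preorder A] [IsDirected A (· ≤ ·)] [Nonempty A]
    (x : A → V)
    (hbdd : ∃ u : W2, u ∈ W1 ∧ 0 ≤ u ∧ ∀ a : A, |(T (x a) : W2)| ≤ u)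
    (h : OTildeConv (fun a => (T (x a) : W2)) (0 : W2)) :
    OTildeConv (fun a => T (x a)) (0 : W1) := by
  obtain ⟨u, huW, hu0, hu⟩ := hbdd
  obtain ⟨B, le, y, hne, hrefl, htrans, hdir, ⟨hmono, hglb⟩, hconv⟩ := h
  have hy0 : ∀ b, 0 ≤ y b := fun b => hglb.1 ⟨b, rfl⟩
  have hmem : ∀ b, y b ⊓ u ∈ W1 := fun b => by
    refine hideal _ u huW ?_
    rw [abs_of_nonneg (le_inf (hy0 b) hu0), abs_of_nonneg hu0]
    exact inf_le_right
  refine ⟨B, le, fun b => ⟨y b ⊓ u, hmem b⟩, hne, hrefl, htrans, hdir, ⟨?_, ?_, ?_⟩, ?_⟩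
  · intro b₁ b₂ hb
    exact Subtype.mk_le_mk.2 (inf_le_inf_right u (hmono b₁ b₂ hb))
  · rintro _ ⟨b, rfl⟩
    exact Subtype.coe_le_coe.1 (le_inf (hy0 b) hu0)
  · intro z hz
    refine Subtype.coe_le_coe.1 (hglb.2 ?_)
    rintro _ ⟨b, rfl⟩
    exact (Subtype.coe_le_coe.2 (hz ⟨b, rfl⟩)).trans inf_le_left
  · intro b
    obtain ⟨a₀, ha₀⟩ := hconv b
    refine ⟨a₀, fun a ha => ?_⟩
    obtain ⟨h₁, h₂⟩ := ha₀ a ha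
    simp only [sub_zero] at h₁ h₂ ⊢
    exact ⟨Subtype.coe_le_coe.1 (le_inf h₁ ((le_abs_self _).trans (hu a))),
      Subtype.coe_le_coe.1 (le_inf h₂ ((neg_le_abs _).trans (hu a)))⟩
end

section
/- Let V be a vector space, W a pre-Riesz space, T : V → W a linear operator, and let (U, i) be a vector lattice cover of W. If a net (x_α) in V satisfies x_α →{W,T} 0, then x_α →{U, i∘T} 0. -/
/-!
If `y ↓ 0` in `W` dominates the net `T x`, then `i ∘ y` dominates `i ∘ T ∘ x`, since `i` is
bipositive; the point is that `i ∘ y ↓ 0` in `U`. Let `u` be a lower bound of `i ∘ y`. By order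
density, `u` is the supremum of the elements `i w ≤ u`. Each such `w` is a lower bound of `y`,
so `w ≤ 0` and `i w ≤ 0`; hence `u ≤ 0`.
-/

/-- Let `V` be a vector space, `W` a pre-Riesz space with vector
lattice cover `(U, i)`, and `T : V → W` linear. If a net `(x_α)` in `V`
satisfies `x_α →{W,T} 0`, then `x_α →{U, i∘T} 0`. -/
theorem stmt_15 {V W U : Type*} [AddCommGroup V] [Module ℝ V]
    [AddCommGroup W] [PartialOrder W] [Module ℝ W]
    [CovariantClass W W (· + ·) (· ≤ ·)] [PosSMulMono ℝ W]
    (hpre : ∀ x y z : W,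
      upperBounds ({x + y, x + z} : Set W) ⊆ upperBounds ({y, z} : Set W) → 0 ≤ x)
    [AddCommGroup U] [Lattice U] [Module ℝ U]
    [CovariantClass U U (· + ·) (· ≤ ·)] [PosSMulMono ℝ U]
    (i : W →ₗ[ℝ] U)
    (hbipos : ∀ w : W, 0 ≤ i w ↔ 0 ≤ w)
    (hdense : ∀ u : U, IsGLB {w : U | w ∈ Set.range i ∧ u ≤ w} u)
    (T : V →ₗ[ℝ] W)
    {A : Type*} [Preorder A] [IsDirected A (· ≤ ·)] [Nonempty A]
    (x : A → V)
    (h : OTildeConv (fun a => T (x a)) (0 : W)) :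
    OTildeConv (fun a => i (T (x a))) (0 : U) := by
  obtain ⟨B, le, y, hne, hrefl, htrans, hdir, ⟨hmono, hglb⟩, hconv⟩ := h
  have hle : ∀ a b : W, i a ≤ i b ↔ a ≤ b := fun a b => by
    have h1 := hbipos (b - a)
    rwa [map_sub, sub_nonneg, sub_nonneg] at h1
  refine ⟨B, le, fun b => i (y b), hne, hrefl, htrans, hdir, ⟨?_, ?_, ?_⟩, ?_⟩
  · exact fun b₁ b₂ hb => (hle _ _).2 (hmono b₁ b₂ hb)
  · rintro _ ⟨b, rfl⟩
    exact (hbipos _).2 (hglb.1 ⟨b, rfl⟩)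
  · intro u hu
    -- Density is applied at `-u`, where it exhibits `u` as a supremum of elements of `i(W)`.
    refine neg_nonneg.1 ((hdense (-u)).2 ?_)
    rintro _ ⟨⟨w, rfl⟩, hw⟩
    have hwy : -w ≤ 0 := hglb.2 <| by
      rintro _ ⟨b, rfl⟩
      rw [← hle, map_neg]
      exact (neg_le.1 hw).trans (hu ⟨b, rfl⟩)
    exact (hbipos w).2 (neg_nonpos.1 hwy)
  · intro b
    obtain ⟨a₀, ha₀⟩ := hconv b
    refine ⟨a₀, fun a ha => ?_⟩
    obtain ⟨h1, h2⟩ := ha₀ a ha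
    rw [sub_zero] at h1 h2 ⊢
    exact ⟨(hle _ _).2 h1, by rw [← map_neg]; exact (hle _ _).2 h2⟩
end

section
/- Let V1 and V2 be pre-Riesz spaces with vector lattice covers (W1, i1) and (W2, i2) respectively, and let S : V1 → V2 be a positive linear operator. Suppose S has a positive, order continuous linear extension S̃ : W1 → W2, i.e., i2 ∘ S = S̃ ∘ i1. Then S is semi-order continuous: for every net (x_α) in V1 with x_α →{W1,i1} x, one has S x_α →{W2,i2} S x. -/
/-- Let `V1, V2` be pre-Riesz spaces with vector lattice covers
`(W1, i1)`, `(W2, i2)` and let `S : V1 → V2` be a positive linear operator with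
a positive order continuous linear extension `S̃ : W1 → W2` (`i2 ∘ S = S̃ ∘ i1`).
Then `S` is semi-order continuous: `x_α →{W1,i1} x` implies
`S x_α →{W2,i2} S x`. -/
theorem stmt_18 {V1 V2 W1 W2 : Type*}
    [AddCommGroup V1] [PartialOrder V1] [Module ℝ V1]
    [CovariantClass V1 V1 (· + ·) (· ≤ ·)] [PosSMulMono ℝ V1]
    (hpre1 : ∀ x y z : V1,
      upperBounds ({x + y, x + z} : Set V1) ⊆ upperBounds ({y, z} : Set V1) → 0 ≤ x)
    [AddCommGroup V2] [PartialOrder V2] [Module ℝ V2]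
    [CovariantClass V2 V2 (· + ·) (· ≤ ·)] [PosSMulMono ℝ V2]
    (hpre2 : ∀ x y z : V2,
      upperBounds ({x + y, x + z} : Set V2) ⊆ upperBounds ({y, z} : Set V2) → 0 ≤ x)
    [AddCommGroup W1] [Lattice W1] [Module ℝ W1]
    [CovariantClass W1 W1 (· + ·) (· ≤ ·)] [PosSMulMono ℝ W1]
    [AddCommGroup W2] [Lattice W2] [Module ℝ W2]
    [CovariantClass W2 W2 (· + ·) (· ≤ ·)] [PosSMulMono ℝ W2]
    (i1 : V1 →ₗ[ℝ] W1)
    (hbipos1 : ∀ v : V1, 0 ≤ i1 v ↔ 0 ≤ v)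
    (hdense1 : ∀ u : W1, IsGLB {w : W1 | w ∈ Set.range i1 ∧ u ≤ w} u)
    (i2 : V2 →ₗ[ℝ] W2)
    (hbipos2 : ∀ v : V2, 0 ≤ i2 v ↔ 0 ≤ v)
    (hdense2 : ∀ u : W2, IsGLB {w : W2 | w ∈ Set.range i2 ∧ u ≤ w} u)
    (S : V1 →ₗ[ℝ] V2) (hSpos : ∀ v : V1, 0 ≤ v → 0 ≤ S v)
    (St : W1 →ₗ[ℝ] W2) (hStpos : ∀ w : W1, 0 ≤ w → 0 ≤ St w)
    (hStoc : OrderContinuousLM St)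
    (hext : ∀ v : V1, i2 (S v) = St (i1 v)) :
    ∀ (A : Type) [Preorder A] [IsDirected A (· ≤ ·)] [Nonempty A]
      (x : A → V1) (l : V1),
      OTildeConv (fun a => i1 (x a)) (i1 l) →
        OTildeConv (fun a => i2 (S (x a))) (i2 (S l)) := by
  have hmono : ∀ u w : W1, u ≤ w → St u ≤ St w := by
    intro u w h
    have := hStpos (w - u) (sub_nonneg.mpr h)
    rw [map_sub] at this
    exact sub_nonneg.mp this
  intro A _ _ _ x l ⟨B, le, y, hne, hrefl, htrans, hdir, ⟨hanti, hglb⟩, hconv⟩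
  have hy0 : ∀ b, 0 ≤ y b := fun b => hglb.1 ⟨b, rfl⟩
  refine ⟨B, le, fun b => St (y b), hne, hrefl, htrans, hdir, ⟨?_, ?_, ?_⟩, ?_⟩
  · exact fun b₁ b₂ h => hmono _ _ (hanti b₁ b₂ h)
  · rintro _ ⟨b, rfl⟩
    exact hStpos _ (hy0 b)
  · intro c hc
    letI : Preorder B := { le := le, le_refl := hrefl, le_trans := htrans }
    haveI : IsDirected B (· ≤ ·) := ⟨hdir⟩
    -- The net `y` o-converges to `0`, dominated by itself.
    have hoc : OConv y (0 : W1) := by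
      refine ⟨y, ⟨hanti, hglb⟩, fun b => ⟨?_, ?_⟩⟩
      · rw [sub_zero]
      · rw [sub_zero]
        exact (neg_nonpos.mpr (hy0 b)).trans (hy0 b)
    obtain ⟨z, ⟨_, hzglb⟩, hz⟩ := hStoc B y hoc
    refine hzglb.2 ?_
    rintro _ ⟨b, rfl⟩
    have h := (hz b).1
    rw [sub_zero] at h
    exact (hc ⟨b, rfl⟩).trans h
  · intro b
    obtain ⟨a₀, ha₀⟩ := hconv b
    refine ⟨a₀, fun a ha => ?_⟩
    obtain ⟨h₁, h₂⟩ := ha₀ a ha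
    have h₁ := hmono _ _ h₁
    have h₂ := hmono _ _ h₂
    rw [map_sub] at h₁
    rw [map_neg, map_sub] at h₂
    simp only [hext]
    exact ⟨h₁, h₂⟩
end
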